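/- If f : H^{n+1} → M is H-equivariant, then for all g₀,…,gₙ ∈ G the function G → M, g ↦ f(ρ(g⁻¹g₀),…,ρ(g⁻¹gₙ)), belongs to Coind_H^G M, and the resulting map Λ(f) : G^{n+1} → Coind_H^G M, Λ(f)(g₀,…,gₙ)(g) = f(ρ(g⁻¹g₀),…,ρ(g⁻¹gₙ)), is G-equivariant. -/

import Mathlib

/-!
The retraction satisfies `ρ (h⁻¹ * y) = h⁻¹ * ρ y` for `h ∈ H`, because `ρ y` is `y` times an
element depending only on the left coset `y⁻¹ H`. Together with the `H`-equivariance of `f` this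
puts `Λ f (g₀, …, gₙ)` in the coinduced module. The `G`-equivariance of `Λ f` is the identity
`g⁻¹ * (x * gᵢ) = (x⁻¹ * g)⁻¹ * gᵢ`.
-/

/-- Let `σ : G ⧸ H → G` be a section of the projection with
`σ(1·H) = 1`, and `ρ g = g * σ (π g⁻¹)` the associated retraction of `G` onto `H`
(taking values in `H`).  If `f : H^{n+1} → M` is `H`-equivariant, then for all
`g₀, …, gₙ ∈ G` the function `g ↦ f (ρ (g⁻¹g₀), …, ρ (g⁻¹gₙ))` belongs to
`Coind_H^G M`, and the resulting map `Λ f : G^{n+1} → Coind_H^G M`,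
`Λ f (g₀, …, gₙ) g = f (ρ (g⁻¹g₀), …, ρ (g⁻¹gₙ))`, is `G`-equivariant (for the action
`(x • F) g = F (x⁻¹ * g)` on `Coind_H^G M`). -/
theorem lambda_coind_equivariant {G : Type*} [Group G] (H : Subgroup G)
    (σ : G ⧸ H → G) (hσ : ∀ x : G ⧸ H, ((σ x : G) : G ⧸ H) = x)
    (hσ1 : σ ((1 : G) : G ⧸ H) = 1)
    (ρ : G → G) (hρ : ∀ g : G, ρ g = g * σ ((g⁻¹ : G) : G ⧸ H))
    (hρH : ∀ g : G, ρ g ∈ H)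
    {M : Type*} [AddCommGroup M] [DistribMulAction G M]
    (n : ℕ) (f : (Fin (n + 1) → H) → M)
    (hf : ∀ (h : H) (t : Fin (n + 1) → H), f (fun i => h * t i) = (h : G) • f t) :
    (∀ (t : Fin (n + 1) → G) (g : G), ∀ h ∈ H,
      f (fun i => (⟨ρ ((g * h)⁻¹ * t i), hρH _⟩ : H))
        = h⁻¹ • f (fun i => (⟨ρ (g⁻¹ * t i), hρH _⟩ : H))) ∧
    (∀ (x : G) (t : Fin (n + 1) → G) (g : G),
      f (fun i => (⟨ρ (g⁻¹ * (x * t i)), hρH _⟩ : H))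
        = f (fun i => (⟨ρ ((x⁻¹ * g)⁻¹ * t i), hρH _⟩ : H))) := by
  -- `ρ` is left `H`-equivariant, since `(h⁻¹ * y)⁻¹ = y⁻¹ * h` and `y⁻¹` lie in the same left coset.
  have key : ∀ h ∈ H, ∀ y : G, ρ (h⁻¹ * y) = h⁻¹ * ρ y := by
    intro h hh y
    have hc : (((h⁻¹ * y)⁻¹ : G) : G ⧸ H) = ((y⁻¹ : G) : G ⧸ H) := by
      rw [mul_inv_rev, inv_inv]
      exact QuotientGroup.mk_mul_of_mem _ hh
    rw [hρ, hρ, hc, mul_assoc]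
  refine ⟨fun t g h hh => ?_, fun x t g => ?_⟩
  · have e := hf ⟨h⁻¹, H.inv_mem hh⟩ (fun i => ⟨ρ (g⁻¹ * t i), hρH _⟩)
    rw [← e]
    congr 1
    funext i
    apply Subtype.ext
    simp only [mul_inv_rev, mul_assoc, Subgroup.coe_mul]
    exact key h hh _
  · simp only [mul_inv_rev, inv_inv, mul_assoc]
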